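/- Let m ≥ 2, let μ be a finite Borel measure on ℝ, and let f : ℝ^m → ℝ be bounded and Borel measurable. Define F_{m,f}(ν) = ⟨f, ν^m⟩ for finite Borel measures ν on ℝ. For each y ∈ ℝ let D_y(ν) := Σ_{j=1}^m ⟨Ψ_j(y)f, ν^{m−1}⟩ (the first variational derivative of F_{m,f} at ν in direction y). Then for all x, y ∈ ℝ the limit lim_{r→0+} (1/r)[D_y(μ + r δ_x) − D_y(μ)] exists and equals Σ_{1≤i,j≤m, i≠j} ⟨Ψ_{i,j}(x,y)f, μ^{m−2}⟩, where Ψ_{i,j}(x,y)f : ℝ^{m−2} → ℝ is obtained from f by placing x in the i-th variable of f, y in the j-th variable of f, and the m−2 remaining arguments, in increasing order of position, as the free variables. -/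

import Mathlib

open MeasureTheory Filter Topology

/-- The position of index `j` among the indices of `Fin (n+2)` after removing index `i`
(meaningful when `i ≠ j`): one has `i.succAbove (auxIdx i j) = j`. -/
def auxIdx {n : ℕ} (i j : Fin (n + 2)) : Fin (n + 1) :=
  if _h : (j : ℕ) < (i : ℕ) then ⟨(j : ℕ), by have := i.isLt; omega⟩
  else ⟨(j : ℕ) - 1, by have := j.isLt; omega⟩

/-- `Ψ_{i,j}(x,y) f : ℝ^n → ℝ` (for `f : ℝ^{n+2} → ℝ`, `i ≠ j`): place `x` in the `i`-th
variable of `f`, `y` in the `j`-th variable of `f`, and the `n` remaining arguments, in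
increasing order of position, as the free variables. -/
def Psi2 {n : ℕ} (i j : Fin (n + 2)) (x y : ℝ) (f : (Fin (n + 2) → ℝ) → ℝ)
    (z : Fin n → ℝ) : ℝ :=
  f (i.insertNth x ((auxIdx i j).insertNth y z))

/-!
Product measures are multilinear in their factors, so `(μ + r σ)^k` expands into the sum over sets
`s` of coordinates of `r ^ |s|` times the product measure with factors `σ` on `s` and `μ` off `s`.
Integrals against it are therefore polynomials in `r`, and the derivative at `0` is the sum of the
terms with `|s| = 1`: the coordinates are integrated against `σ` one at a time. Applied to
`z ↦ f (j.insertNth y z)` and summed over `j`, this runs over all ordered pairs of distinct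
coordinates of `f`, the second of which is frozen at `y`.
-/

open scoped NNReal

theorem hasDerivAt_sum_pow_card_smul {ι E : Type*} [Fintype ι] [NormedAddCommGroup E]
    [NormedSpace ℝ E] (c : Finset ι → E) :
    HasDerivAt (fun r : ℝ => ∑ s, r ^ s.card • c s) (∑ i, c {i}) 0 := by
  have termwise := HasDerivAt.fun_sum (u := Finset.univ) fun s _ =>
    (hasDerivAt_pow (Finset.card s) (0 : ℝ)).smul_const (c s)
  refine termwise.congr_deriv ?_
  have derivative_coeff (k : ℕ) : (k : ℝ) * 0 ^ (k - 1) = if k = 1 then 1 else 0 := by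
    rcases k with _ | _ | k <;> simp
  simp only [derivative_coeff, ite_smul, one_smul, zero_smul, ← Finset.sum_filter]
  rw [Finset.univ_filter_card_eq, Finset.powersetCard_one, Finset.sum_map]
  rfl

section PerturbedProductMeasure

variable {ι : Type*} [DecidableEq ι] {α : ι → Type*} [∀ i, MeasurableSpace (α i)]

instance sigmaFinite_piecewise (μ σ : ∀ i, Measure (α i)) [∀ i, SigmaFinite (μ i)]
    [∀ i, SigmaFinite (σ i)] (s : Finset ι) (i : ι) : SigmaFinite (s.piecewise σ μ i) :=
  s.piecewise_cases σ μ (SigmaFinite ·) inferInstance inferInstance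

variable [Fintype ι] (μ σ : ∀ i, Measure (α i)) [∀ i, SigmaFinite (μ i)]
  [∀ i, SigmaFinite (σ i)]

theorem pi_add_smul (r : ℝ≥0) :
    Measure.pi (fun i => μ i + r • σ i) =
      ∑ s : Finset ι, r ^ s.card • Measure.pi (s.piecewise σ μ) := by
  refine Measure.pi_eq fun t _ => ?_
  have box_piecewise (s : Finset ι) :
      Measure.pi (s.piecewise σ μ) (Set.univ.pi t) =
        (∏ i ∈ s, σ i (t i)) * ∏ i ∈ sᶜ, μ i (t i) := by
    rw [Measure.pi_pi, ← Finset.prod_mul_prod_compl s]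
    congr 1
    · exact Finset.prod_congr rfl fun i hi => by rw [Finset.piecewise_eq_of_mem _ _ _ hi]
    · refine Finset.prod_congr rfl fun i hi => ?_
      rw [Finset.piecewise_eq_of_notMem _ _ _ (Finset.mem_compl.1 hi)]
  simp only [Measure.finsetSum_apply, Measure.add_apply, Measure.smul_apply, box_piecewise,
    ENNReal.smul_def, smul_eq_mul, ENNReal.coe_pow, ← mul_assoc, Finset.pow_card_mul_prod]
  simp only [add_comm (μ _ _), Fintype.prod_add]

variable {E : Type*} [NormedAddCommGroup E] {μ σ} {g : (∀ i, α i) → E}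

theorem integrable_pi_piecewise (hg : Integrable g (Measure.pi fun i => μ i + σ i))
    (s : Finset ι) : Integrable g (Measure.pi (s.piecewise σ μ)) := by
  have expansion := pi_add_smul μ σ 1
  simp only [one_pow, one_smul] at expansion
  rw [expansion, integrable_finsetSum_measure] at hg
  exact hg s (Finset.mem_univ s)

variable [NormedSpace ℝ E]

theorem integral_pi_add_smul (hg : Integrable g (Measure.pi fun i => μ i + σ i)) (r : ℝ≥0) :
    ∫ z, g z ∂(Measure.pi fun i => μ i + r • σ i) =
      ∑ s : Finset ι, (r : ℝ) ^ s.card • ∫ z, g z ∂(Measure.pi (s.piecewise σ μ)) := by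
  rw [pi_add_smul, integral_finsetSum_measure fun s _ =>
    (integrable_pi_piecewise hg s).smul_measure_nnreal]
  simp only [integral_smul_nnreal_measure, NNReal.smul_def, NNReal.coe_pow]

theorem hasDerivWithinAt_integral_pi_add_smul
    (hg : Integrable g (Measure.pi fun i => μ i + σ i)) :
    HasDerivWithinAt
      (fun r : ℝ => ∫ z, g z ∂(Measure.pi fun i => μ i + ENNReal.ofReal r • σ i))
      (∑ i, ∫ z, g z ∂(Measure.pi (Function.update μ i (σ i)))) (Set.Ici 0) 0 := by
  have expansion (r : ℝ) (hr : r ∈ Set.Ici (0 : ℝ)) :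
      ∫ z, g z ∂(Measure.pi fun i => μ i + ENNReal.ofReal r • σ i) =
        ∑ s : Finset ι, r ^ s.card • ∫ z, g z ∂(Measure.pi (s.piecewise σ μ)) := by
    lift r to ℝ≥0 using hr
    simp only [ENNReal.ofReal_coe_nnreal, ← ENNReal.smul_def]
    exact integral_pi_add_smul hg r
  have deriv_expansion := hasDerivAt_sum_pow_card_smul fun s : Finset ι =>
    ∫ z, g z ∂(Measure.pi (s.piecewise σ μ))
  simp only [Finset.piecewise_singleton] at deriv_expansion
  exact deriv_expansion.hasDerivWithinAt.congr_of_mem expansion Set.self_mem_Ici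

end PerturbedProductMeasure

theorem measurable_insertNth {α : Type*} [MeasurableSpace α] {n : ℕ} (i : Fin (n + 1)) (a : α) :
    Measurable fun z : Fin n → α => (i.insertNth a z : Fin (n + 1) → α) :=
  (MeasurableEquiv.piFinSuccAbove (fun _ => α) i).symm.measurable.comp measurable_prodMk_left

theorem integral_pi_update_const {α E : Type*} [MeasurableSpace α] [NormedAddCommGroup E]
    [NormedSpace ℝ E] {μ σ : Measure α} [SigmaFinite μ] [SigmaFinite σ] {n : ℕ}
    (i : Fin (n + 1)) {g : (Fin (n + 1) → α) → E}
    (hg : Integrable g (Measure.pi (Function.update (fun _ => μ) i σ))) :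
    ∫ z, g z ∂(Measure.pi (Function.update (fun _ => μ) i σ)) =
      ∫ z, ∫ a, g (i.insertNth a z) ∂σ ∂(Measure.pi fun _ : Fin n => μ) := by
  have : ∀ j, SigmaFinite (Function.update (fun _ => μ) i σ j) :=
    (Function.forall_update_iff (fun _ => μ) fun _ ν => SigmaFinite ν).2
      ⟨inferInstance, fun _ _ => inferInstance⟩
  have coordinate_split :=
    (measurePreserving_piFinSuccAbove (Function.update (fun _ => μ) i σ) i).symm
  simp only [Function.update_self, Function.update_of_ne (Fin.succAbove_ne i _)] at coordinate_split
  rw [← coordinate_split.integral_comp', integral_prod_symm]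
  · rfl
  · exact coordinate_split.integrable_comp_of_integrable hg

theorem auxIdx_succAbove {n : ℕ} (j : Fin (n + 2)) (k : Fin (n + 1)) :
    auxIdx (j.succAbove k) j = k.predAbove j := by
  rcases lt_or_ge k.castSucc j with h | h
  · have h' : (k : ℕ) < j := h
    simp [auxIdx, Fin.succAbove_of_castSucc_lt _ _ h, Fin.predAbove_of_castSucc_lt _ _ h,
      h'.not_gt, Fin.ext_iff]
  · have h' : (j : ℕ) < k + 1 := Nat.lt_succ_of_le h
    simp [auxIdx, Fin.succAbove_of_le_castSucc _ _ h, Fin.predAbove_of_le_castSucc _ _ h, h',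
      Fin.ext_iff]

theorem insertNth_insertNth {α : Type*} {n : ℕ} (j : Fin (n + 2)) (k : Fin (n + 1)) (a b : α)
    (z : Fin n → α) :
    (j.insertNth b (k.insertNth a z : Fin (n + 1) → α) : Fin (n + 2) → α) =
      (j.succAbove k).insertNth a ((k.predAbove j).insertNth b z : Fin (n + 1) → α) := by
  have at_remaining := Fin.insertNth_apply_succAbove (α := fun _ => α) (j.succAbove k) a
    ((k.predAbove j).insertNth b z)
  refine Fin.insertNth_eq_iff.2 ⟨?_, Fin.insertNth_eq_iff.2 ⟨?_, funext fun l => ?_⟩⟩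
  · simpa only [Fin.succAbove_succAbove_predAbove, Fin.insertNth_apply_same, eq_comm] using
      at_remaining (k.predAbove j)
  · rw [Fin.removeNth_apply, Fin.insertNth_apply_same]
  · rw [Fin.removeNth_apply, Fin.removeNth_apply, ← Fin.succAbove_succAbove_succAbove_predAbove,
      at_remaining, Fin.insertNth_apply_succAbove]

theorem sum_ite_ne_eq_sum_succAbove {n : ℕ} {E : Type*} [AddCommMonoid E]
    (F : Fin (n + 1) → Fin (n + 1) → E) :
    (∑ i, ∑ j, if i ≠ j then F i j else 0) = ∑ j, ∑ k : Fin n, F (j.succAbove k) j := by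
  rw [Finset.sum_comm]
  refine Finset.sum_congr rfl fun j _ => ?_
  simp [Fin.sum_univ_succAbove _ j]

theorem statement1_general {α E : Type*} [MeasurableSpace α] [NormedAddCommGroup E]
    [NormedSpace ℝ E] (n : ℕ) (μ σ : Measure α) [SigmaFinite μ] [SigmaFinite σ]
    (f : (Fin (n + 2) → α) → E) (y : α)
    (hf : ∀ j : Fin (n + 2),
      Integrable (fun z => f (j.insertNth y z)) (Measure.pi fun _ : Fin (n + 1) => μ + σ)) :
    Tendsto
      (fun r : ℝ => r⁻¹ •
        ((∑ j : Fin (n + 2), ∫ z, f (j.insertNth y z)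
            ∂(Measure.pi fun _ : Fin (n + 1) => μ + ENNReal.ofReal r • σ)) -
          ∑ j : Fin (n + 2), ∫ z, f (j.insertNth y z) ∂(Measure.pi fun _ : Fin (n + 1) => μ)))
      (𝓝[>] (0 : ℝ))
      (𝓝 (∑ i : Fin (n + 2), ∑ j : Fin (n + 2),
        if i ≠ j then
          ∫ z, ∫ a, f (i.insertNth a ((auxIdx i j).insertNth y z)) ∂σ
            ∂(Measure.pi fun _ : Fin n => μ)
        else 0)) := by
  have deriv_sum := HasDerivWithinAt.fun_sum (u := Finset.univ) fun j _ =>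
    hasDerivWithinAt_integral_pi_add_smul (hf j)
  have reindex (j : Fin (n + 2)) (k : Fin (n + 1)) :
      ∫ z, f (j.insertNth y z) ∂(Measure.pi (Function.update (fun _ => μ) k σ)) =
        ∫ z, ∫ a, f ((j.succAbove k).insertNth a ((auxIdx (j.succAbove k) j).insertNth y z)) ∂σ
          ∂(Measure.pi fun _ : Fin n => μ) := by
    have slice_integrable := integrable_pi_piecewise (hf j) {k}
    rw [Finset.piecewise_singleton] at slice_integrable
    simp only [integral_pi_update_const k slice_integrable, auxIdx_succAbove,
      insertNth_insertNth j k]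
  rw [sum_ite_ne_eq_sum_succAbove]
  simpa [slope_fun_def, reindex, Set.Ici_sdiff_left] using
    hasDerivWithinAt_iff_tendsto_slope.1 deriv_sum

/-- For `m = n+2 ≥ 2`, a finite Borel measure `μ` on `ℝ` and a bounded Borel
`f : ℝ^m → ℝ`, the first variational derivative `D_y(ν) = ∑_j ⟨Ψ_j(y) f, ν^{m-1}⟩` of
`F_{m,f}` admits, at `μ` in direction `x`, the variational derivative
`∑_{i ≠ j} ⟨Ψ_{i,j}(x,y) f, μ^{m-2}⟩`. -/
theorem statement1 (n : ℕ) (μ : Measure ℝ) [IsFiniteMeasure μ]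
    (f : (Fin (n + 2) → ℝ) → ℝ) (hfm : Measurable f) (C : ℝ)
    (hfb : ∀ z, |f z| ≤ C) (x y : ℝ) :
    Tendsto
      (fun r : ℝ => (1 / r) *
        ((∑ j : Fin (n + 2), ∫ z, f (j.insertNth y z)
            ∂(Measure.pi fun _ : Fin (n + 1) => μ + ENNReal.ofReal r • Measure.dirac x)) -
         ∑ j : Fin (n + 2), ∫ z, f (j.insertNth y z)
            ∂(Measure.pi fun _ : Fin (n + 1) => μ)))
      (𝓝[>] (0 : ℝ))
      (𝓝 (∑ i : Fin (n + 2), ∑ j : Fin (n + 2),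
        if i ≠ j then ∫ z, Psi2 i j x y f z ∂(Measure.pi fun _ : Fin n => μ) else 0)) := by
  simpa [Psi2] using statement1_general n μ (Measure.dirac x) f y fun j =>
    .of_bound (hfm.comp (measurable_insertNth j y)).aestronglyMeasurable C
      (.of_forall fun _ => hfb _)
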